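/- Identify F₃ = {−1,0,1} and index the nine points of F₃ × F₃ in the order (−1,−1), (−1,0), (−1,1), (0,−1), (0,0), (0,1), (1,−1), (1,0), (1,1), assigning them respectively the columns of the 5×9 matrix over F₃ whose rows are (1,0,0,0,0,1,1,1,1), (0,1,0,0,0,1,−1,−1,1), (0,0,1,0,0,1,−1,1,0), (0,0,0,1,0,1,1,0,−1), (0,0,0,0,1,1,0,−1,−1). Let 𝒞 = {A_i ∪ B_j : i,j ∈ F₃} ∪ {C_i ∪ D_j : i,j ∈ F₃}. Then every 4-element subset of columns is linearly independent over F₃, and a 5-element set S of points has linearly dependent columns if and only if S ∈ 𝒞. Consequently, these columns form an F₃-linear representation of the sparse paving matroid of rank 5 on F₃ × F₃ with circuit-hyperplane family 𝒞. -/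

import Mathlib

open Finset

/-- The points of the affine plane over `F₃`. -/
abbrev Pt := ZMod 3 × ZMod 3

/-- The horizontal line `A_i = {(x, i) : x ∈ F₃}`. -/
def lineA (i : ZMod 3) : Finset Pt := Finset.univ.image (fun x => (x, i))

/-- The vertical line `B_j = {(j, y) : y ∈ F₃}`. -/
def lineB (j : ZMod 3) : Finset Pt := Finset.univ.image (fun y => (j, y))

/-- The line `C_i = {(x, y) : x − y = i}`. -/
def lineC (i : ZMod 3) : Finset Pt := Finset.univ.filter (fun p => p.1 - p.2 = i)

/-- The line `D_j = {(x, y) : x + y = j}`. -/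
def lineD (j : ZMod 3) : Finset Pt := Finset.univ.filter (fun p => p.1 + p.2 = j)

/-- The family `𝒞 = {A_i ∪ B_j} ∪ {C_i ∪ D_j}` of circuit-hyperplanes of `T₃²`. -/
def bigCH : Finset (Finset Pt) :=
  (Finset.univ.image (fun p : ZMod 3 × ZMod 3 => lineA p.1 ∪ lineB p.2)) ∪
  (Finset.univ.image (fun p : ZMod 3 × ZMod 3 => lineC p.1 ∪ lineD p.2))

/-- The rank function of the sparse paving matroid of rank 5 on `F₃ × F₃` with
circuit-hyperplane family `bigCH`. -/
def bigRank (X : Finset Pt) : ℕ := if X ∈ bigCH then 4 else min X.card 5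

/-- The columns of the given 5×9 matrix over `F₃`, indexed by the points of `F₃ × F₃`
in the order `(−1,−1), (−1,0), (−1,1), (0,−1), (0,0), (0,1), (1,−1), (1,0), (1,1)`. -/
def col : Pt → Fin 5 → ZMod 3 := fun p =>
  if p = (-1, -1) then ![1, 0, 0, 0, 0]
  else if p = (-1, 0) then ![0, 1, 0, 0, 0]
  else if p = (-1, 1) then ![0, 0, 1, 0, 0]
  else if p = (0, -1) then ![0, 0, 0, 1, 0]
  else if p = (0, 0) then ![0, 0, 0, 0, 1]
  else if p = (0, 1) then ![1, 1, 1, 1, 1]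
  else if p = (1, -1) then ![1, -1, -1, 1, 0]
  else if p = (1, 0) then ![1, -1, 1, 0, -1]
  else ![1, 1, 0, -1, -1]

/-!
Up to a change of sign in three of the columns, the linear relations among the nine columns are
exactly the functions `a + b x + c y + d (x² + y²)` on the affine plane: each of these is a
relation, and both spaces have dimension `4 = 9 - 5`. Completing the square, such a nonzero function
vanishes on at most three points or on a circle of nonzero radius. These circles have four points
each, and their complements are the members of `𝒞`. So a set of at most five points, having a
complement of at least four, supports a nonzero relation if and only if it is a member of `𝒞`.
-/

section LinearRelations

lemma linearIndepOn_finset_iff_forall_mem_ker {R M ι : Type*} [Ring R] [AddCommGroup M]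
    [Module R M] [Fintype ι] {v : ι → M} {S : Finset ι} :
    LinearIndepOn R v (S : Set ι) ↔
      ∀ w ∈ LinearMap.ker (Fintype.linearCombination R v), (∀ i ∉ S, w i = 0) → w = 0 := by
  classical
  simp only [LinearMap.mem_ker, Fintype.linearCombination_apply, linearIndepOn_finset_iff]
  constructor
  · intro hS w hw hwS
    have hsum : ∑ i ∈ S, w i • v i = 0 := by
      rw [← hw]
      exact sum_subset (subset_univ S) fun i _ hi ↦ by rw [hwS i hi, zero_smul]
    funext i
    by_cases hi : i ∈ S
    · exact hS w hsum i hi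
    · exact hwS i hi
  · intro hker f hf i hi
    have hzero := hker (fun j ↦ if j ∈ S then f j else 0)
      (by simpa only [ite_smul, zero_smul, sum_ite_mem, univ_inter] using hf)
      fun j hj ↦ if_neg hj
    simpa only [if_pos hi, Pi.zero_apply] using congrFun hzero i

variable {K V ι : Type*} [DivisionRing K] [AddCommGroup V] [Module K V] {v : ι → V}

lemma linearIndepOn_finset_iff_card_eq_finrank_span_image {S : Finset ι} :
    LinearIndepOn K v (S : Set ι) ↔ #S = Module.finrank K (Submodule.span K (v '' S)) := by
  rw [LinearIndepOn, linearIndependent_iff_card_eq_finrank_span, Set.finrank, ← Set.image_eq_range]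
  simp only [coe_sort_coe, Fintype.card_coe]

lemma finrank_span_image_finset_le_card (S : Finset ι) :
    Module.finrank K (Submodule.span K (v '' S)) ≤ #S := by
  classical
  rw [← coe_image]
  exact (finrank_span_finset_le_card _).trans card_image_le

lemma card_le_finrank_span_image_of_linearIndepOn {S X : Finset ι}
    (hS : LinearIndepOn K v (S : Set ι)) (hSX : S ⊆ X) :
    #S ≤ Module.finrank K (Submodule.span K (v '' X)) := by
  rw [linearIndepOn_finset_iff_card_eq_finrank_span_image.1 hS]
  have := FiniteDimensional.span_of_finite K (X.finite_toSet.image v)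
  exact Submodule.finrank_mono (Submodule.span_mono (Set.image_mono (coe_subset.2 hSX)))

end LinearRelations

section SparsePaving

variable {ι : Type*} [DecidableEq ι]

/-- The families of circuit-hyperplanes of the sparse paving matroids of rank `r`: families of
`r`-sets, any two of which share at most `r - 2` elements. -/
structure IsSparsePavingFamily (r : ℕ) (𝒞 : Finset (Finset ι)) : Prop where
  card_eq : ∀ S ∈ 𝒞, #S = r
  card_inter_add_two_le : ∀ S ∈ 𝒞, ∀ T ∈ 𝒞, S ≠ T → #(S ∩ T) + 2 ≤ r

namespace IsSparsePavingFamily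

variable {r : ℕ} {𝒞 : Finset (Finset ι)} {X : Finset ι}

lemma notMem_of_card_ne (h𝒞 : IsSparsePavingFamily r 𝒞) (hX : #X ≠ r) : X ∉ 𝒞 :=
  fun h ↦ hX (h𝒞.card_eq X h)

lemma exists_subset_card_eq_notMem (h𝒞 : IsSparsePavingFamily r 𝒞) (hempty : ∅ ∉ 𝒞)
    (hX : r < #X) : ∃ S ⊆ X, #S = r ∧ S ∉ 𝒞 := by
  rcases r.eq_zero_or_pos with rfl | hr
  · exact ⟨∅, empty_subset X, card_empty, hempty⟩
  obtain ⟨Y, hYX, hY⟩ := exists_subset_card_eq (Nat.succ_le_of_lt hX)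
  obtain ⟨a, ha, b, hb, hab⟩ := one_lt_card.1 (show 1 < #Y by omega)
  have card_erase {c : ι} (hc : c ∈ Y) : #(Y.erase c) = r := by
    rw [card_erase_of_mem hc, hY, Nat.succ_sub_one]
  by_contra! hall
  have mem_of_erase {c : ι} (hc : c ∈ Y) : Y.erase c ∈ 𝒞 :=
    hall _ ((erase_subset c Y).trans hYX) (card_erase hc)
  have hne : Y.erase a ≠ Y.erase b := (erase_injOn Y).ne ha hb hab
  have hinter : #(Y.erase a ∩ Y.erase b) + 1 = r := by
    rw [inter_erase, inter_eq_left.2 (erase_subset a Y),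
      card_erase_of_mem (mem_erase.2 ⟨hab.symm, hb⟩), card_erase ha]
    omega
  have := h𝒞.card_inter_add_two_le _ (mem_of_erase ha) _ (mem_of_erase hb) hne
  omega

variable {K V : Type*} [DivisionRing K] [AddCommGroup V] [Module K V] {v : ι → V}

lemma finrank_span_image_add_one_of_mem (h𝒞 : IsSparsePavingFamily r 𝒞)
    (hv : ∀ S : Finset ι, #S ≤ r → (LinearIndepOn K v (S : Set ι) ↔ S ∉ 𝒞)) (hX : X ∈ 𝒞) :
    Module.finrank K (Submodule.span K (v '' X)) + 1 = r := by
  have hcard := h𝒞.card_eq X hX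
  have hdep : #X ≠ Module.finrank K (Submodule.span K (v '' X)) := fun h ↦
    (hv X hcard.le).1 (linearIndepOn_finset_iff_card_eq_finrank_span_image.2 h) hX
  have hle : Module.finrank K (Submodule.span K (v '' X)) ≤ #X :=
    finrank_span_image_finset_le_card X
  obtain ⟨Y, hYX, hY⟩ := exists_subset_card_eq (Nat.sub_le #X 1)
  have hindep : LinearIndepOn K v (Y : Set ι) :=
    (hv Y (by omega)).2 (h𝒞.notMem_of_card_ne (by omega))
  have := card_le_finrank_span_image_of_linearIndepOn hindep hYX
  omega

lemma finrank_span_image_of_notMem [FiniteDimensional K V] (h𝒞 : IsSparsePavingFamily r 𝒞)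
    (hV : Module.finrank K V ≤ r)
    (hv : ∀ S : Finset ι, #S ≤ r → (LinearIndepOn K v (S : Set ι) ↔ S ∉ 𝒞)) (hX : X ∉ 𝒞) :
    Module.finrank K (Submodule.span K (v '' X)) = min #X r := by
  rcases le_or_gt #X r with hXr | hrX
  · rw [min_eq_left hXr]
    exact (linearIndepOn_finset_iff_card_eq_finrank_span_image.1 ((hv X hXr).2 hX)).symm
  · rw [min_eq_right hrX.le]
    have hempty : ∅ ∉ 𝒞 := (hv ∅ (Nat.zero_le r)).1 (by
      rw [coe_empty]
      exact linearIndepOn_empty K v)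
    obtain ⟨S, hSX, hS, hS𝒞⟩ := h𝒞.exists_subset_card_eq_notMem hempty hrX
    refine le_antisymm ((Submodule.finrank_le _).trans hV) ?_
    rw [← hS]
    exact card_le_finrank_span_image_of_linearIndepOn ((hv S hS.le).2 hS𝒞) hSX

end IsSparsePavingFamily

end SparsePaving

section Circles

lemma card_pt : Fintype.card Pt = 9 :=
  rfl

/-- The circle with centre `c` and squared radius `r` for the anisotropic form `x² + y²`. -/
def circle (c : Pt) (r : ZMod 3) : Finset Pt := {p | (p.1 - c.1) ^ 2 + (p.2 - c.2) ^ 2 = r}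

lemma card_circle_of_ne_zero : ∀ (c : Pt) {r : ZMod 3}, r ≠ 0 → #(circle c r) = 4 := by
  decide

lemma circle_zero : ∀ c : Pt, circle c 0 = {c} := by
  decide

lemma card_circle_inter_circle_le_two : ∀ (c c' : Pt) {r r' : ZMod 3}, r ≠ 0 → r' ≠ 0 →
    circle c r ≠ circle c' r' → #(circle c r ∩ circle c' r') ≤ 2 := by
  decide

lemma compl_circle_neg_one : ∀ c : Pt, (circle c (-1))ᶜ = lineA c.2 ∪ lineB c.1 := by
  decide

lemma compl_circle_one : ∀ c : Pt, (circle c 1)ᶜ = lineC (c.1 - c.2) ∪ lineD (c.1 + c.2) := by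
  decide

lemma mem_bigCH_iff_exists_compl_eq_circle {S : Finset Pt} :
    S ∈ bigCH ↔ ∃ c r, r ≠ 0 ∧ Sᶜ = circle c r := by
  simp only [bigCH, mem_union, mem_image, mem_univ, true_and]
  constructor
  · rintro (⟨⟨i, j⟩, rfl⟩ | ⟨⟨i, j⟩, rfl⟩)
    · exact ⟨(j, i), -1, by decide, compl_eq_comm.1 (compl_circle_neg_one (j, i))⟩
    · have centre : ∀ i j : ZMod 3, -(i + j) - (i - j) = i ∧ -(i + j) + (i - j) = j := by decide
      have hcompl := compl_circle_one (-(i + j), i - j)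
      rw [(centre i j).1, (centre i j).2] at hcompl
      exact ⟨(-(i + j), i - j), 1, by decide, compl_eq_comm.1 hcompl⟩
  · rintro ⟨c, r, hr, hS⟩
    have eq_neg_one_or_one : ∀ r : ZMod 3, r ≠ 0 → r = -1 ∨ r = 1 := by decide
    obtain rfl := compl_eq_comm.1 hS
    rcases eq_neg_one_or_one r hr with rfl | rfl
    · exact Or.inl ⟨(c.2, c.1), (compl_circle_neg_one c).symm⟩
    · exact Or.inr ⟨(c.1 - c.2, c.1 + c.2), (compl_circle_one c).symm⟩

lemma isSparsePavingFamily_bigCH : IsSparsePavingFamily 5 bigCH where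
  card_eq S hS := by
    obtain ⟨c, r, hr, hS⟩ := mem_bigCH_iff_exists_compl_eq_circle.1 hS
    have hcard := card_add_card_compl S
    rw [hS, card_circle_of_ne_zero c hr, card_pt] at hcard
    omega
  card_inter_add_two_le S hS T hT hST := by
    obtain ⟨c, r, hr, hS⟩ := mem_bigCH_iff_exists_compl_eq_circle.1 hS
    obtain ⟨c', r', hr', hT⟩ := mem_bigCH_iff_exists_compl_eq_circle.1 hT
    have hne : circle c r ≠ circle c' r' := by
      rw [← hS, ← hT]
      exact compl_injective.ne hST
    have hinter := card_circle_inter_circle_le_two c c' hr hr' hne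
    have hunion := card_union_add_card_inter (circle c r) (circle c' r')
    have hcard := card_add_card_compl (S ∩ T)
    rw [compl_inter, hS, hT, card_pt] at hcard
    rw [card_circle_of_ne_zero c hr, card_circle_of_ne_zero c' hr'] at hunion
    omega

end Circles

section CircleForms

/-- The function `a₀ + a₁ x + a₂ y + a₃ (x² + y²)` on the affine plane, as a linear function of its
coefficients. -/
def circleForm : (Fin 4 → ZMod 3) →ₗ[ZMod 3] Pt → ZMod 3 where
  toFun a p := a 0 + a 1 * p.1 + a 2 * p.2 + a 3 * (p.1 ^ 2 + p.2 ^ 2)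
  map_add' a b := by
    funext p
    simp only [Pi.add_apply]
    ring
  map_smul' k a := by
    funext p
    simp only [Pi.smul_apply, smul_eq_mul, RingHom.id_apply]
    ring

lemma circleForm_apply (a : Fin 4 → ZMod 3) (p : Pt) :
    circleForm a p = a 0 + a 1 * p.1 + a 2 * p.2 + a 3 * (p.1 ^ 2 + p.2 ^ 2) :=
  rfl

-- In characteristic 3, `(x - s)² = x² + s x + s²`.
lemma circleForm_eq_zero_iff_mem_circle {a : Fin 4 → ZMod 3} (ha : a 3 ≠ 0) (p : Pt) :
    circleForm a p = 0 ↔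
      p ∈ circle (a 1 / a 3, a 2 / a 3) ((a 1 ^ 2 + a 2 ^ 2) / a 3 ^ 2 - a 0 / a 3) := by
  have three : (3 : ZMod 3) = 0 := rfl
  have complete_square : circleForm a p = a 3 * ((p.1 - a 1 / a 3) ^ 2 + (p.2 - a 2 / a 3) ^ 2 -
      ((a 1 ^ 2 + a 2 ^ 2) / a 3 ^ 2 - a 0 / a 3)) := by
    rw [circleForm_apply]
    field_simp
    linear_combination a 3 * (a 1 * p.1 + a 2 * p.2) * three
  rw [complete_square, mul_eq_zero_iff_left ha, sub_eq_zero, circle, mem_filter_univ]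

lemma exists_circleForm_eq_zero_iff_mem_circle (c : Pt) (r : ZMod 3) :
    ∃ a ≠ 0, ∀ p, circleForm a p = 0 ↔ p ∈ circle c r := by
  let a : Fin 4 → ZMod 3 := ![c.1 ^ 2 + c.2 ^ 2 - r, c.1, c.2, 1]
  have ha : a 3 ≠ 0 := one_ne_zero
  refine ⟨a, fun h ↦ ha (congrFun h 3), fun p ↦ ?_⟩
  simpa [a] using circleForm_eq_zero_iff_mem_circle ha p

lemma card_affine_eq_zero_le_three : ∀ {a b c : ZMod 3}, (a, b, c) ≠ 0 →
    #{p : Pt | a + b * p.1 + c * p.2 = 0} ≤ 3 := by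
  decide

lemma card_circleForm_eq_zero_le_three_or_eq_circle {a : Fin 4 → ZMod 3} (ha : a ≠ 0) :
    #{p | circleForm a p = 0} ≤ 3 ∨
      ∃ c r, r ≠ 0 ∧ ({p | circleForm a p = 0} : Finset Pt) = circle c r := by
  by_cases ha3 : a 3 = 0
  · left
    simp only [circleForm_apply, ha3, zero_mul, add_zero]
    refine card_affine_eq_zero_le_three fun h ↦ ha ?_
    obtain ⟨h0, h1, h2⟩ : a 0 = 0 ∧ a 1 = 0 ∧ a 2 = 0 := by simpa using h
    funext i
    fin_cases i <;> assumption
  · simp only [circleForm_eq_zero_iff_mem_circle ha3, filter_univ_mem]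
    generalize (a 1 / a 3, a 2 / a 3) = c
    by_cases hr : (a 1 ^ 2 + a 2 ^ 2) / a 3 ^ 2 - a 0 / a 3 = 0
    · left
      rw [hr, circle_zero, card_singleton]
      decide
    · exact Or.inr ⟨c, _, hr, rfl⟩

lemma circleForm_injective : Function.Injective circleForm := by
  rw [injective_iff_map_eq_zero]
  intro a ha
  by_contra hne
  have hzeros : ({p | circleForm a p = 0} : Finset Pt) = univ := by
    rw [ha]
    exact filter_true_of_mem fun _ _ ↦ rfl
  have hcard := card_circleForm_eq_zero_le_three_or_eq_circle hne
  rw [hzeros, card_univ, card_pt] at hcard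
  obtain h | ⟨c, r, hr, h⟩ := hcard
  · omega
  · have := congrArg card h
    rw [card_univ, card_pt, card_circle_of_ne_zero c hr] at this
    omega

end CircleForms

section Columns

/-- The signs by which the columns must be rescaled for their linear relations to become the
functions `circleForm a`. -/
def colSign (p : Pt) : ZMod 3 := if p = (0, -1) ∨ p = (0, 0) ∨ p = (1, 0) then -1 else 1

lemma colSign_ne_zero : ∀ p, colSign p ≠ 0 := by
  decide

/-- The linear relation among the columns given by the coefficients of a `circleForm`. -/
def circleRelation : (Fin 4 → ZMod 3) →ₗ[ZMod 3] Pt → ZMod 3 :=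
  LinearMap.mulLeft (ZMod 3) colSign ∘ₗ circleForm

lemma circleRelation_apply_eq_zero_iff {a : Fin 4 → ZMod 3} {p : Pt} :
    circleRelation a p = 0 ↔ circleForm a p = 0 :=
  mul_eq_zero_iff_left (colSign_ne_zero p)

lemma circleRelation_injective : Function.Injective circleRelation := by
  rw [injective_iff_map_eq_zero]
  intro a ha
  refine (map_eq_zero_iff circleForm circleForm_injective).1 (funext fun p ↦ ?_)
  exact circleRelation_apply_eq_zero_iff.1 (congrFun ha p)

lemma linearCombination_col_comp_circleRelation :
    Fintype.linearCombination (ZMod 3) col ∘ₗ circleRelation = 0 := by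
  refine (Pi.basisFun (ZMod 3) (Fin 4)).ext fun i ↦ ?_
  rw [Pi.basisFun_apply]
  revert i
  decide

lemma range_linearCombination_col :
    LinearMap.range (Fintype.linearCombination (ZMod 3) col) = ⊤ := by
  rw [Fintype.range_linearCombination, eq_top_iff, ← (Pi.basisFun (ZMod 3) (Fin 5)).span_eq]
  refine Submodule.span_mono ?_
  rintro _ ⟨i, rfl⟩
  rw [Pi.basisFun_apply]
  revert i
  decide

lemma finrank_ker_linearCombination_col :
    Module.finrank (ZMod 3) (LinearMap.ker (Fintype.linearCombination (ZMod 3) col)) = 4 := by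
  have rank_nullity := (Fintype.linearCombination (ZMod 3) col).finrank_range_add_finrank_ker
  rw [range_linearCombination_col, finrank_top, Module.finrank_fin_fun,
    Module.finrank_fintype_fun_eq_card, card_pt] at rank_nullity
  omega

lemma ker_linearCombination_col :
    LinearMap.ker (Fintype.linearCombination (ZMod 3) col) = LinearMap.range circleRelation := by
  symm
  apply Submodule.eq_of_le_of_finrank_eq
  · exact LinearMap.range_le_ker_iff.2 linearCombination_col_comp_circleRelation
  · rw [finrank_ker_linearCombination_col,
      LinearMap.finrank_range_of_inj circleRelation_injective, Module.finrank_fin_fun]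

lemma linearIndepOn_col_iff_forall_circleForm {S : Finset Pt} :
    LinearIndepOn (ZMod 3) col (S : Set Pt) ↔
      ∀ a, (∀ p ∉ S, circleForm a p = 0) → a = 0 := by
  simp only [linearIndepOn_finset_iff_forall_mem_ker, ker_linearCombination_col,
    LinearMap.mem_range, forall_exists_index, forall_apply_eq_imp_iff,
    circleRelation_apply_eq_zero_iff, map_eq_zero_iff circleRelation circleRelation_injective]

lemma linearIndepOn_col_iff_notMem_bigCH (S : Finset Pt) (hS : #S ≤ 5) :
    LinearIndepOn (ZMod 3) col (S : Set Pt) ↔ S ∉ bigCH := by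
  rw [linearIndepOn_col_iff_forall_circleForm, mem_bigCH_iff_exists_compl_eq_circle]
  constructor
  · rintro hindep ⟨c, r, -, hS⟩
    obtain ⟨a, ha, hac⟩ := exists_circleForm_eq_zero_iff_mem_circle c r
    refine ha (hindep a fun p hp ↦ ?_)
    rwa [hac, ← hS, mem_compl]
  · intro hnot a haS
    by_contra ha
    have hsub : Sᶜ ⊆ ({p | circleForm a p = 0} : Finset Pt) := fun p hp ↦
      (mem_filter_univ p).2 (haS p (mem_compl.1 hp))
    have hcompl : 4 ≤ #Sᶜ := by
      rw [card_compl, card_pt]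
      omega
    rcases card_circleForm_eq_zero_le_three_or_eq_circle ha with hle | ⟨c, r, hr, heq⟩
    · have := card_le_card hsub
      omega
    · rw [heq] at hsub
      have hcard : #(circle c r) ≤ #Sᶜ := (card_circle_of_ne_zero c hr).trans_le hcompl
      exact hnot ⟨c, r, hr, eq_of_subset_of_card_le hsub hcard⟩

end Columns

/-- Every 4 columns are linearly independent; a 5-element set of columns is dependent
iff it belongs to `𝒞`; consequently the columns give an `F₃`-linear representation of
the sparse paving matroid of rank 5 with circuit-hyperplane family `𝒞`. -/
theorem stmt_16 :
    (∀ S : Finset Pt, S.card = 4 →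
      LinearIndependent (ZMod 3) (fun p : {x // x ∈ S} => col p.1)) ∧
    (∀ S : Finset Pt, S.card = 5 →
      (¬ LinearIndependent (ZMod 3) (fun p : {x // x ∈ S} => col p.1) ↔ S ∈ bigCH)) ∧
    (∀ X : Finset Pt,
      Module.finrank (ZMod 3) ↥(Submodule.span (ZMod 3) (col '' ↑X)) = bigRank X) := by
  have h𝒞 := isSparsePavingFamily_bigCH
  refine ⟨fun S hS ↦ ?_, fun S hS ↦ ?_, fun X ↦ ?_⟩
  · have hS𝒞 : S ∉ bigCH := h𝒞.notMem_of_card_ne (by omega)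
    exact (linearIndepOn_col_iff_notMem_bigCH S (by omega)).2 hS𝒞
  · exact not_iff_comm.1 (linearIndepOn_col_iff_notMem_bigCH S hS.le).symm
  · rw [bigRank]
    split_ifs with hX
    · have := h𝒞.finrank_span_image_add_one_of_mem linearIndepOn_col_iff_notMem_bigCH hX
      omega
    · exact h𝒞.finrank_span_image_of_notMem (Module.finrank_fin_fun (ZMod 3)).le
        linearIndepOn_col_iff_notMem_bigCH hX
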